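/- Let D > 0, set N := ⌊2D·max{κ_s, κ_p}·e²⌋ and t := 1/c_p² − 2D(ω/c_s³)·( Σ_{l=0}^{N−1} (κ_s D/2)^l + 2^{1−N} ) − D(ω/c_p³)·( Σ_{l=0}^{N−1} (κ_p D/2)^l + 2^{1−N} ). Then for all z, z′ ∈ ℝ³ with 0 < |z − z′| ≤ D and every v ∈ ℝ³, the real part of the Kupradze matrix satisfies vᵀ·Re(Γ^ω(z, z′))·v ≥ (t/(4π|z − z′|))·|v|². -/

import Mathlib

noncomputable section
open Real

abbrev E3 := EuclideanSpace ℝ (Fin 3)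

/-- Free-space fundamental solution of the Helmholtz equation. -/
def Phi (κ : ℝ) (x y : E3) : ℂ :=
  Complex.exp (Complex.I * κ * ‖x - y‖) / (4 * Real.pi * ‖x - y‖)

/-- Phase velocity `c_s = √μ`. -/
def cS (mu : ℝ) : ℝ := Real.sqrt mu

/-- Phase velocity `c_p = √(λ+2μ)`. -/
def cP (lam mu : ℝ) : ℝ := Real.sqrt (lam + 2 * mu)

/-- Transversal wavenumber `κ_s = ω/c_s`. -/
def kappaS (mu om : ℝ) : ℝ := om / cS mu

/-- Longitudinal wavenumber `κ_p = ω/c_p`. -/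
def kappaP (lam mu om : ℝ) : ℝ := om / cP lam mu

/-- The Kupradze matrix of the fundamental solution of the Navier equation. -/
def Gamma (lam mu om : ℝ) (x y : E3) (i j : Fin 3) : ℂ :=
  (1 / (mu : ℂ)) * Phi (kappaS mu om) x y * (if i = j then 1 else 0)
  + (1 / (om : ℂ) ^ 2) *
      fderiv ℝ
        (fun x' : E3 =>
          fderiv ℝ
            (fun x'' : E3 => Phi (kappaS mu om) x'' y - Phi (kappaP lam mu om) x'' y)
            x' (EuclideanSpace.single j 1))
        x (EuclideanSpace.single i 1)

/-- `N := ⌊2D·max{κ_s,κ_p}·e²⌋`. -/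
def NOm (lam mu om D : ℝ) : ℕ :=
  Nat.floor (2 * D * max (kappaS mu om) (kappaP lam mu om) * Real.exp 1 ^ 2)

/-- The constant `t` of Theorem 1.1:
`t = 1/c_p² − 2D(ω/c_s³)(Σ_{l<N}(κ_s D/2)^l + 2^{1−N}) − D(ω/c_p³)(Σ_{l<N}(κ_p D/2)^l + 2^{1−N})`. -/
def tConst (lam mu om D : ℝ) : ℝ :=
  1 / cP lam mu ^ 2
    - 2 * D * (om / cS mu ^ 3) *
        ((∑ l ∈ Finset.range (NOm lam mu om D), (kappaS mu om * D / 2) ^ l)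
          + (2 : ℝ) ^ ((1 : ℤ) - (NOm lam mu om D : ℤ)))
    - D * (om / cP lam mu ^ 3) *
        ((∑ l ∈ Finset.range (NOm lam mu om D), (kappaP lam mu om * D / 2) ^ l)
          + (2 : ℝ) ^ ((1 : ℤ) - (NOm lam mu om D : ℤ)))

lemma aux_cos_le {s : ℝ} (hs : 0 ≤ s) (h4 : s ≤ 4) : Real.cos s ≤ 1 - s^2/2 + s^4/24 := by
  have h1 := Real.sin_ge_sub_cube (x := s/2) (by linarith)
  have h2 : Real.cos s = 1 - 2 * Real.sin (s/2)^2 := by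
    have := Real.cos_two_mul (s/2)
    have h3 := Real.sin_sq_add_cos_sq (s/2)
    rw [show 2 * (s/2) = s by ring] at this
    linarith
  have h0 : 0 ≤ s/2 - (s/2)^3/6 := by
    have : s/2 - (s/2)^3/6 = s * (24 - s^2) / 48 := by ring
    rw [this]
    have : 0 ≤ 24 - s^2 := by nlinarith
    positivity
  have h5 : (s/2 - (s/2)^3/6)^2 ≤ Real.sin (s/2)^2 := pow_le_pow_left₀ h0 h1 2
  have h6 : 0 ≤ s^6 := by positivity
  rw [h2]
  nlinarith

lemma aux_K1 {s : ℝ} (hs : 0 < s) :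
    s^2 * (1/2 - s) ≤ s * Real.sin s + Real.cos s - 1 := by
  have hc := Real.one_sub_sq_div_two_le_cos (x := s)
  rcases le_total s 6 with h | h
  · have h1 := mul_le_mul_of_nonneg_left (Real.sin_ge_sub_cube hs.le) hs.le
    have : 0 ≤ s^3 * (6 - s) := mul_nonneg (by positivity) (by linarith)
    nlinarith
  · have h1 := mul_le_mul_of_nonneg_left (Real.neg_one_le_sin s) hs.le
    have : 0 ≤ s^2 * (s - 6) := mul_nonneg (by positivity) (by linarith)
    nlinarith

lemma aux_K2 {s : ℝ} (hs : 0 < s) :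
    s^2 * (1/2 - 2*s) ≤ s^2 * Real.cos s - s * Real.sin s - Real.cos s + 1 := by
  have h1 := mul_le_mul_of_nonneg_left (Real.sin_le hs.le) hs.le
  rcases le_total s 3 with h | h
  · have hc := mul_le_mul_of_nonneg_left (Real.one_sub_sq_div_two_le_cos (x := s)) (sq_nonneg s)
    have h2 := aux_cos_le hs.le (by linarith)
    have : 0 ≤ s^3 * (3 - s) := mul_nonneg (by positivity) (by linarith)
    have : 0 ≤ s^3 := by positivity
    nlinarith
  · have hc := mul_le_mul_of_nonneg_left (Real.neg_one_le_cos s) (sq_nonneg s)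
    have := Real.cos_le_one s
    have : 0 ≤ s^2 * (s - 3) := mul_nonneg (by positivity) (by linarith)
    nlinarith

lemma aux_K3 {s : ℝ} (hs : 0 < s) :
    - s^3 ≤ s^2 * Real.cos s - 2 * s * Real.sin s - 2 * Real.cos s + 2 := by
  have hc := mul_le_mul_of_nonneg_left (Real.one_sub_sq_div_two_le_cos (x := s)) (sq_nonneg s)
  have h1 := mul_le_mul_of_nonneg_left (Real.sin_le hs.le) hs.le
  have h1' := mul_le_mul_of_nonneg_left (Real.sin_le_one s) hs.le
  have h1c := Real.cos_le_one s
  have hc' := mul_le_mul_of_nonneg_left (Real.neg_one_le_cos s) (sq_nonneg s)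
  rcases le_total s (12/7) with h | h
  · have h2 := aux_cos_le hs.le (by linarith)
    have : 0 ≤ s^3 * (12/7 - s) := mul_nonneg (by positivity) (by linarith)
    nlinarith
  rcases le_total s 2 with h2 | h2
  · have h3 : 0 ≤ s * ((2 - s) * (s^2/2 - 1)) :=
      mul_nonneg hs.le (mul_nonneg (by linarith) (by nlinarith))
    nlinarith
  · have h3 : 0 ≤ s * ((s - 2) * (s + 1)) :=
      mul_nonneg hs.le (mul_nonneg (by linarith) (by linarith))
    nlinarith

lemma aux_norm {x y : E3} (h : x ≠ y) :
    HasFDerivAt (fun x' : E3 => ‖x' - y‖) ((‖x - y‖⁻¹) • innerSL ℝ (x - y)) x := by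
  have hn : 0 < ‖x - y‖ := norm_pos_iff.2 (sub_ne_zero.2 h)
  have h1 := ((hasFDerivAt_id (𝕜 := ℝ) x).sub_const y).norm_sq
  have h2 := h1.sqrt (by simpa using hn.ne')
  have h3 : (fun x' : E3 => Real.sqrt (‖id x' - y‖^2)) = fun x' => ‖x' - y‖ := by
    funext x'; simp
  rw [h3] at h2
  convert! h2 using 1
  ext w
  simp
  field_simp

lemma aux_fderiv1 {g g1 : ℝ → ℂ} (hg : ∀ r, 0 < r → HasDerivAt g (g1 r) r) {x y : E3}
    (h : x ≠ y) (w : E3) :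
    fderiv ℝ (fun x' : E3 => g ‖x' - y‖) x w
      = ((inner ℝ w (x - y) * ‖x - y‖⁻¹ : ℝ) : ℂ) * g1 ‖x - y‖ := by
  have hn : 0 < ‖x - y‖ := norm_pos_iff.2 (sub_ne_zero.2 h)
  have := (hg _ hn).hasFDerivAt.comp x (aux_norm h)
  have h2 := this.fderiv
  simp only [Function.comp_def] at h2
  rw [h2]
  have hw : (inner ℝ w (x - y) : ℝ) = inner ℝ x w - inner ℝ y w := by
    rw [real_inner_comm, inner_sub_left]
  rw [hw]
  simp
  ring

lemma aux_fderiv2 {g g1 g2 : ℝ → ℂ} (hg : ∀ r, 0 < r → HasDerivAt g (g1 r) r)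
    (hg1 : ∀ r, 0 < r → HasDerivAt g1 (g2 r) r) {x y : E3}
    (h : x ≠ y) (e w : E3) :
    fderiv ℝ (fun x1 : E3 => fderiv ℝ (fun x' : E3 => g ‖x' - y‖) x1 e) x w
      = ((inner ℝ e w * ‖x - y‖⁻¹ : ℝ) : ℂ) * g1 ‖x - y‖
        + ((inner ℝ e (x - y) * inner ℝ w (x - y) : ℝ) : ℂ) *
          (g2 ‖x - y‖ / ‖x - y‖^2 - g1 ‖x - y‖ / ‖x - y‖^3) := by
  have hn : 0 < ‖x - y‖ := norm_pos_iff.2 (sub_ne_zero.2 h)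
  have hev : (fun x1 : E3 => fderiv ℝ (fun x' : E3 => g ‖x' - y‖) x1 e) =ᶠ[nhds x]
      fun x1 : E3 => (inner ℝ e (x1 - y)) • ((fun r : ℝ => ((r⁻¹ : ℝ) : ℂ) * g1 r) ‖x1 - y‖) := by
    filter_upwards [isOpen_ne.mem_nhds h] with x1 hx1
    rw [aux_fderiv1 hg hx1]
    simp only [Complex.real_smul]
    push_cast
    ring
  rw [hev.fderiv_eq]
  have hk := ((hasDerivAt_inv hn.ne').ofReal_comp).mul (hg1 _ hn)
  have hk2 := hk.hasFDerivAt.comp x (aux_norm h)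
  have hi : HasFDerivAt (fun x1 : E3 => (inner ℝ e (x1 - y) : ℝ)) (innerSL ℝ e) x :=
    (innerSL ℝ e).hasFDerivAt.comp x ((hasFDerivAt_id (𝕜 := ℝ) x).sub_const y)
  have h3 := (hi.smul hk2).fderiv
  have h4 : (fun x1 : E3 => (inner ℝ e (x1 - y)) • ((fun r : ℝ => ((r⁻¹ : ℝ) : ℂ) * g1 r) ‖x1 - y‖))
    = ((fun x1 : E3 => (inner ℝ e (x1 - y) : ℝ)) •
      (((fun r : ℝ => ((r⁻¹ : ℝ) : ℂ)) * g1) ∘ fun x' : E3 => ‖x' - y‖)) := by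
    funext x1; simp
  rw [h4]
  refine (congrArg (fun L : E3 →L[ℝ] ℂ => L w) h3).trans ?_
  have hnc : (‖x - y‖ : ℂ) ≠ 0 := by exact_mod_cast hn.ne'
  have hw : (inner ℝ w (x - y) : ℝ) = inner ℝ x w - inner ℝ y w := by
    rw [real_inner_comm, inner_sub_left]
  rw [hw]
  simp
  field_simp
  ring

def gg (κ : ℝ) (r : ℝ) : ℂ := Complex.exp (Complex.I * κ * r) / (4 * Real.pi * r)
def gg1 (κ : ℝ) (r : ℝ) : ℂ :=
  Complex.exp (Complex.I * κ * r) * (Complex.I * κ * r - 1) / (4 * Real.pi * r^2)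
def gg2 (κ : ℝ) (r : ℝ) : ℂ :=
  Complex.exp (Complex.I * κ * r) * (-κ^2 * r^2 - 2 * Complex.I * κ * r + 2)
    / (4 * Real.pi * r^3)

lemma aux_pi : (Real.pi : ℂ) ≠ 0 := by exact_mod_cast Real.pi_ne_zero

lemma aux_exp (κ r : ℝ) : HasDerivAt (fun r : ℝ => Complex.exp (Complex.I * κ * r))
    (Complex.exp (Complex.I * κ * r) * (Complex.I * κ)) r := by
  have h := ((hasDerivAt_id (r:ℂ)).const_mul (Complex.I * κ)).cexp.comp_ofReal
  simpa using h

lemma aux_gg (κ r : ℝ) (hr : 0 < r) : HasDerivAt (gg κ) (gg1 κ r) r := by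
  have hp := aux_pi
  have hrc : (r : ℂ) ≠ 0 := by exact_mod_cast hr.ne'
  have hid : HasDerivAt (fun r : ℝ => (r : ℂ)) 1 r := by
    simpa using (hasDerivAt_id (r:ℂ)).comp_ofReal
  have h := (aux_exp κ r).div (hid.const_mul (4 * (Real.pi : ℂ))) (by simp [hp, hrc])
  refine h.congr_deriv ?_
  unfold gg1
  field_simp

lemma aux_gg1 (κ r : ℝ) (hr : 0 < r) : HasDerivAt (gg1 κ) (gg2 κ r) r := by
  have hp := aux_pi
  have hrc : (r : ℂ) ≠ 0 := by exact_mod_cast hr.ne'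
  have hid : HasDerivAt (fun r : ℝ => (r : ℂ)) 1 r := by
    simpa using (hasDerivAt_id (r:ℂ)).comp_ofReal
  have h := ((aux_exp κ r).mul ((hid.const_mul (Complex.I * κ)).sub_const 1)).div
    ((hid.pow 2).const_mul (4 * (Real.pi : ℂ))) (by simp [hp, hrc])
  refine h.congr_deriv ?_
  unfold gg2
  simp only [Pi.pow_apply, Pi.mul_apply]
  field_simp
  ring_nf
  simp only [Complex.I_sq]
  ring

lemma aux_expre (κ r : ℝ) : Complex.exp (Complex.I * κ * r)
    = (Real.cos (κ * r) : ℂ) + (Real.sin (κ * r) : ℂ) * Complex.I := by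
  rw [show Complex.I * κ * r = ((κ * r : ℝ) : ℂ) * Complex.I by push_cast; ring,
    Complex.exp_mul_I, Complex.ofReal_cos, Complex.ofReal_sin]

lemma aux_ggre (κ r : ℝ) : (gg κ r).re = Real.cos (κ * r) / (4 * Real.pi * r) := by
  unfold gg
  rw [aux_expre, show (4 * (Real.pi:ℂ) * r) = ((4 * Real.pi * r : ℝ) : ℂ) by push_cast; ring,
    Complex.div_ofReal_re]
  simp [-Complex.ofReal_cos, -Complex.ofReal_sin]

lemma aux_gg1re (κ r : ℝ) : (gg1 κ r).re
    = (-(κ * r) * Real.sin (κ * r) - Real.cos (κ * r)) / (4 * Real.pi * r^2) := by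
  unfold gg1
  rw [aux_expre, show (4 * (Real.pi:ℂ) * r^2) = ((4 * Real.pi * r^2 : ℝ) : ℂ) by push_cast; ring,
    Complex.div_ofReal_re]
  congr 1
  simp [-Complex.ofReal_cos, -Complex.ofReal_sin]
  ring

lemma aux_gg2re (κ r : ℝ) : (gg2 κ r).re
    = (-(κ * r)^2 * Real.cos (κ * r) + 2 * (κ * r) * Real.sin (κ * r) + 2 * Real.cos (κ * r))
      / (4 * Real.pi * r^3) := by
  unfold gg2
  rw [aux_expre, show (4 * (Real.pi:ℂ) * r^3) = ((4 * Real.pi * r^3 : ℝ) : ℂ) by push_cast; ring,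
    Complex.div_ofReal_re]
  congr 1
  rw [show (-(κ:ℂ)^2 * r^2 - 2 * Complex.I * κ * r + 2)
    = ((-(κ*r)^2 + 2 : ℝ) : ℂ) + ((-2 * (κ * r) : ℝ) : ℂ) * Complex.I by push_cast; ring]
  simp only [Complex.add_re, Complex.mul_re, Complex.add_im, Complex.mul_im, Complex.ofReal_re,
    Complex.ofReal_im, Complex.I_re, Complex.I_im]
  ring

lemma aux_Gamma (lam mu om : ℝ) {z z' : E3} (h : z ≠ z') (i j : Fin 3) :
    (Gamma lam mu om z z' i j).re =
      (1 / mu * (gg (kappaS mu om) ‖z - z'‖).re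
        + 1 / om^2 * (‖z - z'‖⁻¹ * ((gg1 (kappaS mu om) ‖z - z'‖).re
          - (gg1 (kappaP lam mu om) ‖z - z'‖).re))) * (if i = j then 1 else 0)
      + 1 / om^2 * ((z - z') i * (z - z') j) *
        (((gg2 (kappaS mu om) ‖z - z'‖).re - (gg2 (kappaP lam mu om) ‖z - z'‖).re) / ‖z - z'‖^2
        - ((gg1 (kappaS mu om) ‖z - z'‖).re
          - (gg1 (kappaP lam mu om) ‖z - z'‖).re) / ‖z - z'‖^3) := by
  have key := aux_fderiv2 (g := fun r => gg (kappaS mu om) r - gg (kappaP lam mu om) r)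
    (g1 := fun r => gg1 (kappaS mu om) r - gg1 (kappaP lam mu om) r)
    (g2 := fun r => gg2 (kappaS mu om) r - gg2 (kappaP lam mu om) r)
    (fun r hr => (aux_gg _ r hr).sub (aux_gg _ r hr))
    (fun r hr => (aux_gg1 _ r hr).sub (aux_gg1 _ r hr)) h
    (EuclideanSpace.single j 1) (EuclideanSpace.single i 1)
  have hG : ∀ q : ℂ, fderiv ℝ (fun x1 : E3 => fderiv ℝ (fun x' : E3 =>
      gg (kappaS mu om) ‖x' - z'‖ - gg (kappaP lam mu om) ‖x' - z'‖) x1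
        (EuclideanSpace.single j 1)) z (EuclideanSpace.single i 1) = q →
      Gamma lam mu om z z' i j = (1 / (mu : ℂ)) * gg (kappaS mu om) ‖z - z'‖
        * (if i = j then 1 else 0) + (1 / (om : ℂ) ^ 2) * q := by
    intro q hq
    rw [← hq]
    rfl
  rw [hG _ key]
  have e1 : (inner ℝ (EuclideanSpace.single j (1:ℝ)) (EuclideanSpace.single i (1:ℝ)) : ℝ)
      = if i = j then 1 else 0 := by
    simp [EuclideanSpace.inner_single_left, eq_comm]
  have e2 : ∀ k : Fin 3, (inner ℝ (EuclideanSpace.single k (1:ℝ)) (z - z') : ℝ) = (z - z') k := by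
    intro k
    simp [EuclideanSpace.inner_single_left]
  rw [e1, e2, e2]
  generalize (z - z') i = a
  generalize (z - z') j = b
  generalize ‖z - z'‖ = r
  rw [show (1 / (mu:ℂ)) = ((1/mu : ℝ) : ℂ) by push_cast; ring,
    show (1 / (om:ℂ)^2) = ((1/om^2 : ℝ) : ℂ) by push_cast; ring,
    show (if i = j then (1:ℂ) else 0) = (((if i = j then 1 else 0 : ℝ)) : ℂ) by split_ifs <;> simp,
    ← Complex.ofReal_pow, ← Complex.ofReal_pow]
  generalize (if i = j then (1:ℝ) else 0) = d
  rw [mul_right_comm, ← Complex.ofReal_mul]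
  simp only [Complex.add_re, Complex.re_ofReal_mul, Complex.sub_re, Complex.div_ofReal_re]
  ring

lemma aux_S {q : ℝ} (hq : 0 ≤ q) (N : ℕ) :
    1 ≤ (∑ l ∈ Finset.range N, q ^ l) + (2 : ℝ) ^ ((1 : ℤ) - (N : ℤ)) := by
  rcases N with _ | n
  · norm_num
  · rw [Finset.sum_range_succ']
    have h1 : 0 ≤ ∑ k ∈ Finset.range n, q^(k+1) := Finset.sum_nonneg fun _ _ => by positivity
    have h2 : (0:ℝ) < (2 : ℝ) ^ ((1 : ℤ) - ((n+1 : ℕ) : ℤ)) := by positivity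
    simp only [pow_zero]
    linarith

set_option maxHeartbeats 1000000 in
/-- The key kernel lower bound in the proof of Lemma 3.2: for
`0 < |z − z′| ≤ D` and any `v ∈ ℝ³`,
`vᵀ Re(Γ^ω(z,z′)) v ≥ (t/(4π|z−z′|)) |v|²`. -/
theorem gamma_real_part_lower_bound (lam mu om D : ℝ) (hmu : 0 < mu)
    (hlm : 0 < 3 * lam + 2 * mu) (hom : 0 < om) (hD : 0 < D)
    (z z' : E3) (hzz : z ≠ z') (hle : dist z z' ≤ D) (v : E3) :
    (tConst lam mu om D / (4 * Real.pi * dist z z')) * ‖v‖ ^ 2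
      ≤ ∑ i : Fin 3, ∑ j : Fin 3, v i * (Gamma lam mu om z z' i j).re * v j := by
  have hn : 0 < ‖z - z'‖ := norm_pos_iff.2 (sub_ne_zero.2 hzz)
  simp_rw [aux_Gamma lam mu om hzz]
  rw [dist_eq_norm] at *
  have hv : ‖v‖^2 = v 0 ^2 + v 1 ^2 + v 2 ^2 := by
    rw [EuclideanSpace.norm_sq_eq]; simp [Fin.sum_univ_three]
  have hzn : ‖z - z'‖^2 = (z-z') 0 ^2 + (z-z') 1 ^2 + (z-z') 2 ^2 := by
    rw [EuclideanSpace.norm_sq_eq]; simp only [Fin.sum_univ_three, Real.norm_eq_abs, sq_abs]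
  have hcs : ((z-z') 0 * v 0 + (z-z') 1 * v 1 + (z-z') 2 * v 2)^2 ≤ ‖z - z'‖^2 * ‖v‖^2 := by
    rw [hv, hzn]
    nlinarith [sq_nonneg ((z-z') 0 * v 1 - (z-z') 1 * v 0),
      sq_nonneg ((z-z') 0 * v 2 - (z-z') 2 * v 0), sq_nonneg ((z-z') 1 * v 2 - (z-z') 2 * v 1)]
  have hv0 : 0 ≤ ‖v‖^2 := by positivity
  set u := (z-z') 0 * v 0 + (z-z') 1 * v 1 + (z-z') 2 * v 2 with hu
  set r := ‖z - z'‖ with hr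
  have hsum : ∀ A B : ℝ, (∑ i : Fin 3, ∑ j : Fin 3, v i * (A * (if i = j then 1 else 0)
      + 1 / om^2 * ((z - z') i * (z - z') j) * B) * v j) = A * ‖v‖^2 + 1/om^2 * B * u^2 := by
    intro A B
    rw [hv, hu]
    simp [Fin.sum_univ_three]
    ring
  rw [hsum, aux_ggre, aux_gg1re, aux_gg1re, aux_gg2re, aux_gg2re]
  -- constants
  have hp : 0 < lam + 2 * mu := by linarith
  have hcS : 0 < cS mu := Real.sqrt_pos.2 hmu
  have hcP : 0 < cP lam mu := Real.sqrt_pos.2 hp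
  have hcS2 : cS mu ^ 2 = mu := Real.sq_sqrt hmu.le
  have hcSP : cS mu ≤ cP lam mu := Real.sqrt_le_sqrt (by linarith)
  have hkS : 0 < kappaS mu om := div_pos hom hcS
  have hkP : 0 < kappaP lam mu om := div_pos hom hcP
  have hkk : kappaP lam mu om ≤ kappaS mu om := div_le_div_of_nonneg_left hom.le hcS hcSP
  have hmuk : 1 / mu = kappaS mu om ^2 / om^2 := by
    have h1 : 1 / mu = 1 / cS mu ^ 2 := by rw [hcS2]
    rw [h1]; unfold kappaS; field_simp
  have ht : om^2 * tConst lam mu om D ≤ kappaP lam mu om ^2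
      - 2 * kappaS mu om^2 * (kappaS mu om * r) - kappaP lam mu om^2 * (kappaP lam mu om * r) := by
    have hS := aux_S (q := kappaS mu om * D / 2) (by positivity) (NOm lam mu om D)
    have hP := aux_S (q := kappaP lam mu om * D / 2) (by positivity) (NOm lam mu om D)
    unfold tConst
    set S1 := (∑ l ∈ Finset.range (NOm lam mu om D), (kappaS mu om * D / 2) ^ l)
          + (2 : ℝ) ^ ((1 : ℤ) - (NOm lam mu om D : ℤ))
    set S2 := (∑ l ∈ Finset.range (NOm lam mu om D), (kappaP lam mu om * D / 2) ^ l)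
          + (2 : ℝ) ^ ((1 : ℤ) - (NOm lam mu om D : ℤ))
    have e : om^2 * (1 / cP lam mu ^ 2 - 2 * D * (om / cS mu ^ 3) * S1
        - D * (om / cP lam mu ^ 3) * S2) = kappaP lam mu om ^2
      - 2 * kappaS mu om^2 * (kappaS mu om * (D * S1))
      - kappaP lam mu om^2 * (kappaP lam mu om * (D * S2)) := by
      unfold kappaS kappaP
      field_simp
    rw [e]
    have h1 : r ≤ D * S1 := hle.trans (le_mul_of_one_le_right hD.le hS)
    have h2 : r ≤ D * S2 := hle.trans (le_mul_of_one_le_right hD.le hP)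
    gcongr
  generalize tConst lam mu om D = t at *
  generalize kappaS mu om = a at *
  generalize kappaP lam mu om = b at *
  have hsS : 0 < a * r := mul_pos hkS hn
  have hsP : 0 < b * r := mul_pos hkP hn
  have hpi := Real.pi_pos
  have hab : b^2 ≤ a^2 := pow_le_pow_left₀ hkP.le hkk 2
  -- transversal and longitudinal bounds
  have hT : om^2 * t * r^2 ≤ (a*r)^2 * Real.cos (a*r) - (a*r) * Real.sin (a*r) - Real.cos (a*r)
      + (b*r) * Real.sin (b*r) + Real.cos (b*r) := by
    have k2 := aux_K2 hsS
    have k1 := aux_K1 hsP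
    have ht' := mul_le_mul_of_nonneg_right ht (sq_nonneg r)
    have hab' := mul_le_mul_of_nonneg_right hab (sq_nonneg r)
    linarith
  have hL : om^2 * t * r^2 ≤ 2 * (a*r) * Real.sin (a*r) + 2 * Real.cos (a*r)
      + (b*r)^2 * Real.cos (b*r) - 2 * (b*r) * Real.sin (b*r) - 2 * Real.cos (b*r) := by
    have k1 := aux_K1 hsS
    have k3 := aux_K3 hsP
    have ht' := mul_le_mul_of_nonneg_right ht (sq_nonneg r)
    have hab' := mul_le_mul_of_nonneg_right hab (sq_nonneg r)
    linarith
  rw [hmuk]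
  generalize Real.cos (a*r) = c1 at *
  generalize Real.cos (b*r) = c2 at *
  generalize Real.sin (a*r) = s1 at *
  generalize Real.sin (b*r) = s2 at *
  have hT2 := mul_le_mul_of_nonneg_right hT (sub_nonneg.2 hcs)
  have hL2 := mul_le_mul_of_nonneg_right hL (sq_nonneg u)
  have hom2 : om ≠ 0 := hom.ne'
  have hrn : r ≠ 0 := hn.ne'
  have hpn : Real.pi ≠ 0 := hpi.ne'
  generalize ‖v‖^2 = V at *
  clear_value u r
  rw [← sub_nonneg]
  have hpos : 0 < 4 * Real.pi * r^5 * om^2 := by positivity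
  refine nonneg_of_mul_nonneg_right (a := 4 * Real.pi * r^5 * om^2) ?_ hpos
  have hsum2 := sub_nonneg.2 (add_le_add hT2 hL2)
  refine hsum2.trans_eq ?_
  field_simp
  ring

end
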